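/- arXiv:math/0104199 — 6 statements merged into one kernel-verified Lean document; each statement's English description precedes it below -/
import Mathlib

section
/- Fix ε ∈ (0,1) and a sequence of positive constants (C_m)_{m∈ℕ}. For every N ∈ ℕ there exists a constant C > 0 such that the following holds for every integer j ≥ 1: if f : ℝ³ → ℂ is a Schwartz function whose Fourier transform is supported in the closed ball of radius 3·2^j about the origin, and φ : ℝ³ → ℂ is a smooth function whose support has diameter at most 1 and which satisfies sup_x ‖(iterated derivative of order m of φ)(x)‖ ≤ C_m · 2^{m·j(1−ε)} for every m ∈ ℕ, then the L² norm of the restriction of the Fourier transform of the product φ·f to the set {ξ ∈ ℝ³ : ‖ξ‖ > 4·2^j} is at most C · 2^{-Nj} · ‖f‖_{L²(ℝ³)}. -/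
open MeasureTheory SchwartzMap
open scoped FourierTransform

section op

open scoped ContDiff RealInnerProductSpace

abbrev E3 := EuclideanSpace ℝ (Fin 3)

/-- Averaging operator. -/
noncomputable def TT {F : Type} [NormedAddCommGroup F] [NormedSpace ℂ F] [NormedSpace ℝ F]
    (K : 𝓢(E3, ℂ)) (r : ℝ) (g : E3 → F) (x : E3) : F := ∫ y, K y • g (x - r • y)

/-- Smooth with bounded derivatives. -/
def BS {F : Type} [NormedAddCommGroup F] [NormedSpace ℝ F] (g : E3 → F) : Prop :=
  ContDiff ℝ ∞ g ∧ ∀ m : ℕ, ∃ B : ℝ, ∀ x, ‖iteratedFDeriv ℝ m g x‖ ≤ B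

/-- One minus the averaging operator. -/
noncomputable def LL {F : Type} [NormedAddCommGroup F] [NormedSpace ℂ F] [NormedSpace ℝ F]
    (K : 𝓢(E3, ℂ)) (r : ℝ) (g : E3 → F) (x : E3) : F := g x - TT K r g x

variable {F : Type} [NormedAddCommGroup F] [NormedSpace ℂ F] [NormedSpace ℝ F]
  [SMulCommClass ℝ ℂ F] [CompleteSpace F] (K : 𝓢(E3, ℂ)) (r : ℝ) {g : E3 → F}

omit [NormedSpace ℂ F] [SMulCommClass ℝ ℂ F] [CompleteSpace F] in
lemma BS.bdd (h : BS g) : ∃ B : ℝ, ∀ x, ‖g x‖ ≤ B := by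
  obtain ⟨B, hB⟩ := h.2 0
  exact ⟨B, fun x => by simpa using hB x⟩

omit [NormedSpace ℂ F] [SMulCommClass ℝ ℂ F] [CompleteSpace F] in
lemma BS.fderiv (h : BS g) : BS (fderiv ℝ g) := by
  refine ⟨h.1.fderiv_right (by simp), fun m => ?_⟩
  obtain ⟨B, hB⟩ := h.2 (m + 1)
  exact ⟨B, fun x => by rw [norm_iteratedFDeriv_fderiv]; exact hB x⟩

omit [SMulCommClass ℝ ℂ F] [CompleteSpace F] [NormedSpace ℝ F] in
lemma TT_integrable (hc : Continuous g) (hb : ∃ B : ℝ, ∀ x, ‖g x‖ ≤ B) (x : E3) :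
    Integrable (fun y => K y • g (x - r • y)) := by
  obtain ⟨B, hB⟩ := hb
  refine ((K.integrable (μ := volume)).norm.mul_const B).mono' ?_ (.of_forall fun y => ?_)
  · exact (K.continuous.smul (hc.comp (by fun_prop))).aestronglyMeasurable
  · rw [norm_smul]; gcongr; exact hB _

omit [SMulCommClass ℝ ℂ F] [CompleteSpace F] in
lemma TT_bdd (hb : ∃ B : ℝ, ∀ x, ‖g x‖ ≤ B) : ∃ B : ℝ, ∀ x, ‖TT K r g x‖ ≤ B := by
  obtain ⟨B, hB⟩ := hb
  refine ⟨∫ y, ‖K y‖ * B, fun x => ?_⟩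
  refine norm_integral_le_of_norm_le ((K.integrable (μ := volume)).norm.mul_const B) (.of_forall fun y => ?_)
  rw [norm_smul]; gcongr; exact hB _

omit [CompleteSpace F] in
lemma TT_hasFDerivAt (h : BS g) (x : E3) :
    HasFDerivAt (TT K r g) (TT K r (fderiv ℝ g) x) x := by
  obtain ⟨B, hB⟩ := h.fderiv.bdd
  have hd : Differentiable ℝ g := h.1.differentiable (by simp)
  refine hasFDerivAt_integral_of_dominated_of_fderiv_le (F := fun x y => K y • g (x - r • y))
    (F' := fun x y => K y • fderiv ℝ g (x - r • y)) (bound := fun y => ‖K y‖ * B)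
    Filter.univ_mem (.of_forall fun z => (TT_integrable K r h.1.continuous h.bdd z).1)
    (TT_integrable K r h.1.continuous h.bdd x)
    (TT_integrable K r h.fderiv.1.continuous h.fderiv.bdd x).1
    (.of_forall fun y z _ => ?_) ((K.integrable (μ := volume)).norm.mul_const B) (.of_forall fun y z _ => ?_)
  · rw [norm_smul]; gcongr; exact hB _
  · have h1 : HasFDerivAt (fun z => g (z - r • y)) (fderiv ℝ g (z - r • y)) z := by
      rw [hasFDerivAt_comp_sub]; exact (hd _).hasFDerivAt
    exact h1.const_smul (K y)

lemma TT_aux (n : ℕ) : ∀ {F : Type} [NormedAddCommGroup F] [NormedSpace ℂ F] [NormedSpace ℝ F]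
    [SMulCommClass ℝ ℂ F] {g : E3 → F}, BS g →
    ContDiff ℝ n (TT K r g) ∧ ∃ B : ℝ, ∀ x, ‖iteratedFDeriv ℝ n (TT K r g) x‖ ≤ B := by
  induction n with
  | zero =>
    intro F _ _ _ _ g h
    refine ⟨?_, ?_⟩
    · simp only [Nat.cast_zero, contDiff_zero]
      exact continuous_iff_continuousAt.2 fun x => (TT_hasFDerivAt K r h x).continuousAt
    · simpa using TT_bdd K r h.bdd
  | succ n ih =>
    intro F _ _ _ _ g h
    have e : _root_.fderiv ℝ (TT K r g) = TT K r (_root_.fderiv ℝ g) :=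
      funext fun x => (TT_hasFDerivAt K r h x).fderiv
    obtain ⟨h1, B, hB⟩ := ih h.fderiv
    refine ⟨?_, B, fun x => ?_⟩
    · push_cast
      rw [contDiff_succ_iff_fderiv]
      refine ⟨fun x => (TT_hasFDerivAt K r h x).differentiableAt, by simp, ?_⟩
      rw [e]; exact h1
    · rw [← norm_iteratedFDeriv_fderiv, e]; exact hB x

omit [CompleteSpace F] in
lemma BS.TT (h : BS g) : BS (TT K r g) :=
  ⟨contDiff_infty.2 fun n => (TT_aux K r n h).1, fun n => (TT_aux K r n h).2⟩

omit [CompleteSpace F] in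
lemma BS.LL (h : BS g) : BS (LL K r g) := by
  have h' := h.TT K r
  refine ⟨h.1.sub h'.1, fun m => ?_⟩
  obtain ⟨B, hB⟩ := h.2 m
  obtain ⟨B', hB'⟩ := h'.2 m
  refine ⟨B + B', fun x => ?_⟩
  have : iteratedFDeriv ℝ m (_root_.LL K r g) x
      = iteratedFDeriv ℝ m g x - iteratedFDeriv ℝ m (_root_.TT K r g) x := by
    have := iteratedFDeriv_sub_apply (𝕜 := ℝ) (i := m) (x := x)
      (h.1.contDiffAt.of_le (by exact_mod_cast le_top))
      (h'.1.contDiffAt.of_le (by exact_mod_cast le_top))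
    exact this
  rw [this]
  exact (norm_sub_le _ _).trans (add_le_add (hB x) (hB' x))

omit [CompleteSpace F] in
lemma LL_fderiv (h : BS g) : fderiv ℝ (LL K r g) = LL K r (fderiv ℝ g) := by
  funext x
  exact ((h.1.differentiable (by simp) x).hasFDerivAt.sub (TT_hasFDerivAt K r h x)).fderiv

omit [CompleteSpace F] in
lemma LL_iter (k : ℕ) : ∀ {g : E3 → F}, BS g → BS ((LL K r)^[k] g) ∧
    fderiv ℝ ((LL K r)^[k] g) = (LL K r)^[k] (fderiv ℝ g) := by
  induction k with
  | zero => intro g h; exact ⟨h, rfl⟩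
  | succ k ih =>
    intro g h
    have := ih (h.LL K r)
    rw [LL_fderiv K r h] at this
    exact this

omit [SMulCommClass ℝ ℂ F] in
lemma LL_le (hK : ∫ y, K y = 1) (hr : 0 ≤ r) (h : BS g) {B : ℝ} (hB : ∀ x, ‖fderiv ℝ g x‖ ≤ B)
    (x : E3) : ‖LL K r g x‖ ≤ (∫ y, ‖y‖ * ‖K y‖) * r * B := by
  have e : LL K r g x = ∫ y, K y • (g x - g (x - r • y)) := by
    simp only [smul_sub]
    rw [integral_sub ((K.integrable (μ := volume)).smul_const _)
      (TT_integrable K r h.1.continuous h.bdd x), integral_smul_const, hK, one_smul]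
    rfl
  rw [e, mul_assoc, ← integral_mul_const]
  refine norm_integral_le_of_norm_le ?_ (.of_forall fun y => ?_)
  · exact (by simpa using K.integrable_pow_mul volume 1 : Integrable fun y => ‖y‖ * ‖K y‖).mul_const _
  · have := convex_univ.norm_image_sub_le_of_norm_fderiv_le (𝕜 := ℝ) (f := g) (C := B)
      (fun x _ => h.1.differentiable (by simp) x) (fun x _ => hB x)
      (Set.mem_univ (x - r • y)) (Set.mem_univ x)
    rw [sub_sub_cancel, norm_smul, Real.norm_of_nonneg hr] at this
    rw [norm_smul]
    calc _ ≤ ‖K y‖ * (B * (r * ‖y‖)) := by gcongr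
      _ = _ := by ring

lemma LL_iter_le (hK : ∫ y, K y = 1) (hr : 0 ≤ r) (M : ℕ) :
    ∀ {F : Type} [NormedAddCommGroup F] [NormedSpace ℂ F] [NormedSpace ℝ F]
    [SMulCommClass ℝ ℂ F] [CompleteSpace F] {g : E3 → F}, BS g → ∀ {B : ℝ},
    (∀ x, ‖iteratedFDeriv ℝ M g x‖ ≤ B) → ∀ x,
    ‖(LL K r)^[M] g x‖ ≤ ((∫ y, ‖y‖ * ‖K y‖) * r) ^ M * B := by
  induction M with
  | zero => intro F _ _ _ _ _ g h B hB x; simpa using hB x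
  | succ M ih =>
    intro F _ _ _ _ _ g h B hB x
    rw [Function.iterate_succ_apply', pow_succ', mul_assoc]
    refine LL_le K r hK hr (LL_iter K r M h).1 (fun z => ?_) x
    rw [(LL_iter K r M h).2]
    exact ih h.fderiv (fun z => by rw [norm_iteratedFDeriv_fderiv]; exact hB z) z



lemma fourier_K_scaled {R : ℝ} (hR : 0 < R) (hK : ∀ ζ : E3, 1 ≤ ‖ζ‖ → 𝓕 (K : E3 → ℂ) ζ = 0)
    (z ζ : E3) (hζ : R ≤ ‖ζ‖) : 𝓕 (fun x : E3 => K (R • (x - z))) ζ = 0 := by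
  have h0 := hK (R⁻¹ • ζ) (by
    rw [norm_smul, norm_inv, Real.norm_of_nonneg hR.le, ← div_eq_inv_mul, one_le_div hR]; exact hζ)
  rw [Real.fourier_eq] at h0 ⊢
  rw [← integral_add_right_eq_self _ z]
  have e : ∀ x : E3, (Real.fourierChar (-⟪x + z, ζ⟫)) • K (R • (x + z - z))
      = ((Real.fourierChar (-⟪z, ζ⟫) : Circle) : ℂ) *
        (fun u : E3 => (Real.fourierChar (-⟪u, R⁻¹ • ζ⟫)) • K u) (R • x) := by
    intro x
    simp only [add_sub_cancel_right]
    rw [← smul_eq_mul, ← Circle.smul_def, smul_smul, ← AddChar.map_add_eq_mul, inner_add_left,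
      real_inner_smul_left, real_inner_smul_right, mul_inv_cancel_left₀ hR.ne', neg_add, add_comm]
  rw [integral_congr_ae (.of_forall e), integral_const_mul, Measure.integral_comp_smul volume
    (fun u : E3 => (Real.fourierChar (-⟪u, R⁻¹ • ζ⟫)) • K u) R, h0]
  simp

lemma TT_eq {R : ℝ} (hR : 0 < R) (h : E3 → ℂ) (x : E3) :
    ∫ z, K (R • (x - z)) * h z = |(R ^ 3)⁻¹| • TT K R⁻¹ h x := by
  rw [← integral_sub_left_eq_self _ volume x]
  have := Measure.integral_comp_smul volume (fun u : E3 => K u • h (x - R⁻¹ • u)) R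
  simp only [finrank_euclideanSpace, Fintype.card_fin] at this
  unfold TT
  rw [← this]
  congr 1
  ext z
  simp [smul_smul, inv_mul_cancel₀ hR.ne']

lemma inner_vanish {R : ℝ} (hR : 0 < R) (hK : ∀ ζ : E3, 1 ≤ ‖ζ‖ → 𝓕 (K : E3 → ℂ) ζ = 0)
    (f : 𝓢(E3, ℂ)) (hf : Function.support (𝓕 (f : E3 → ℂ)) ⊆ Metric.closedBall 0 (3 * R))
    (ξ : E3) (hξ : 4 * R < ‖ξ‖) (z : E3) :
    ∫ x, (Real.fourierChar (-⟪x, ξ⟫)) • (f x * K (R • (x - z))) = 0 := by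
  set G : E3 → ℂ := fun x => (Real.fourierChar (-⟪x, ξ⟫)) • K (R • (x - z)) with hG
  have hki : Integrable (fun x => K (R • (x - z))) :=
    ((K.integrable (μ := volume)).comp_smul hR.ne').comp_sub_right z
  have hGi : Integrable G := (Real.fourierIntegral_convergent_iff ξ).2 hki
  have hfe : ∀ x, f x = 𝓕 ((𝓕⁻ f : 𝓢(E3, ℂ)) : E3 → ℂ) x := by
    intro x
    rw [← SchwartzMap.fourier_coe, FourierTransform.fourier_fourierInv_eq]
  have e1 : ∫ x, (Real.fourierChar (-⟪x, ξ⟫)) • (f x * K (R • (x - z)))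
      = ∫ x, 𝓕 ((𝓕⁻ f : 𝓢(E3, ℂ)) : E3 → ℂ) x • G x := by
    congr 1; ext x
    rw [← hfe, hG]
    simp only [Circle.smul_def, smul_eq_mul]; ring
  have e2 := VectorFourier.integral_fourierIntegral_smul_eq_flip (μ := (volume : Measure E3))
    (ν := (volume : Measure E3)) (L := innerₗ E3) (e := Real.fourierChar)
    (f := ((𝓕⁻ f : 𝓢(E3, ℂ)) : E3 → ℂ)) (g := G) Real.continuous_fourierChar
    (by simpa using continuous_inner) (𝓕⁻ f).integrable hGi
  rw [e1]
  refine e2.trans (integral_eq_zero_of_ae (.of_forall fun η => ?_))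
  rw [flip_innerₗ]
  change (𝓕⁻ f : 𝓢(E3, ℂ)) η • 𝓕 G η = 0
  by_cases hη : 3 * R < ‖η‖
  · have : (𝓕⁻ f : 𝓢(E3, ℂ)) η = 0 := by
      change 𝓕 (f : E3 → ℂ) (-η) = 0
      by_contra hne
      have := hf hne
      simp at this
      linarith
    rw [this, zero_smul]
  · have : 𝓕 G η = 𝓕 (fun x : E3 => K (R • (x - z))) (η + ξ) := by
      rw [Real.fourier_eq, Real.fourier_eq]
      congr 1; ext x
      rw [hG]
      simp only
      rw [smul_smul, ← AddChar.map_add_eq_mul, inner_add_right, neg_add]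
    rw [this, fourier_K_scaled K hR hK, smul_zero]
    have := norm_sub_le (η + ξ) η
    rw [add_sub_cancel_left] at this
    linarith

lemma vanish {R : ℝ} (hR : 0 < R) (hK : ∀ ζ : E3, 1 ≤ ‖ζ‖ → 𝓕 (K : E3 → ℂ) ζ = 0)
    (f : 𝓢(E3, ℂ)) (hf : Function.support (𝓕 (f : E3 → ℂ)) ⊆ Metric.closedBall 0 (3 * R))
    (ξ : E3) (hξ : 4 * R < ‖ξ‖) {h : E3 → ℂ} (hc : Continuous h) (hb : ∃ B : ℝ, ∀ x, ‖h x‖ ≤ B) :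
    𝓕 (fun x => TT K R⁻¹ h x * f x) ξ = 0 := by
  have hc0 : |(R ^ 3)⁻¹| ≠ 0 := by positivity
  have key : |(R ^ 3)⁻¹| • 𝓕 (fun x => TT K R⁻¹ h x * f x) ξ = 0 := by
    rw [Real.fourier_eq, ← integral_smul]
    have e : ∀ x : E3, |(R ^ 3)⁻¹| • Real.fourierChar (-⟪x, ξ⟫) • (TT K R⁻¹ h x * f x)
        = ∫ z, (Real.fourierChar (-⟪x, ξ⟫)) • (f x * K (R • (x - z))) * h z := by
      intro x
      have : ∀ z : E3, (Real.fourierChar (-⟪x, ξ⟫)) • (f x * K (R • (x - z))) * h z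
        = ((Real.fourierChar (-⟪x, ξ⟫)) • f x) * (K (R • (x - z)) * h z) := by
        intro z; simp only [Circle.smul_def, smul_eq_mul]; ring
      simp_rw [this]
      rw [integral_const_mul, TT_eq K hR]
      simp only [Circle.smul_def, smul_eq_mul, Complex.real_smul]; ring
    simp_rw [e]
    rw [integral_integral_swap]
    · refine integral_eq_zero_of_ae (.of_forall fun z => ?_)
      simp only
      rw [integral_mul_const, inner_vanish K hR hK f hf ξ hξ z, zero_mul]; rfl
    · obtain ⟨B, hB⟩ := hb
      have h1 : Integrable (fun u => K ((-R) • u)) :=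
        (K.integrable (μ := volume)).comp_smul (neg_ne_zero.2 hR.ne')
      have h2 := ((f.integrable (μ := volume)).convolution_integrand
        (ContinuousLinearMap.mul ℂ ℂ) h1).swap.norm.mul_const B
      refine h2.mono' ?_ (.of_forall fun p => ?_)
      · refine Continuous.aestronglyMeasurable ?_
        have h3 : Continuous fun p : E3 × E3 => Real.fourierChar (-⟪p.1, ξ⟫) :=
          Real.continuous_fourierChar.comp (by fun_prop)
        have h4 := K.continuous
        have h5 := f.continuous
        simp only [Function.uncurry_def, Circle.smul_def]
        fun_prop
      · simp only [Function.uncurry, Function.comp, Prod.fst_swap, Prod.snd_swap,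
          ContinuousLinearMap.mul_apply', norm_mul, Circle.norm_smul]
        rw [neg_smul, ← smul_neg, neg_sub]
        gcongr
        exact hB _
  exact (smul_eq_zero.1 key).resolve_left hc0

lemma TT_mul_integrable (f : 𝓢(E3, ℂ)) {h : E3 → ℂ} (hb : BS h) :
    Integrable (fun x => h x * f x) := by
  obtain ⟨B, hB⟩ := hb.bdd
  exact (f.integrable (μ := volume)).bdd_mul (c := B) hb.1.continuous.aestronglyMeasurable (.of_forall hB)

lemma decomp {R : ℝ} (hR : 0 < R) (hK : ∀ ζ : E3, 1 ≤ ‖ζ‖ → 𝓕 (K : E3 → ℂ) ζ = 0)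
    (f : 𝓢(E3, ℂ)) (hf : Function.support (𝓕 (f : E3 → ℂ)) ⊆ Metric.closedBall 0 (3 * R))
    (ξ : E3) (hξ : 4 * R < ‖ξ‖) {φ : E3 → ℂ} (hφ : BS φ) (M : ℕ) :
    𝓕 (fun x => φ x * f x) ξ = 𝓕 (fun x => (LL K R⁻¹)^[M] φ x * f x) ξ := by
  induction M with
  | zero => rfl
  | succ M ih =>
    rw [ih]
    have hb := (LL_iter K R⁻¹ M hφ).1
    set h := (LL K R⁻¹)^[M] φ with hh
    have hv := vanish K hR hK f hf ξ hξ hb.1.continuous hb.bdd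
    rw [Real.fourier_eq] at hv ⊢
    rw [Real.fourier_eq, ← sub_zero (∫ v, _), ← hv, ← integral_sub
      ((Real.fourierIntegral_convergent_iff ξ).2 (TT_mul_integrable f hb))
      ((Real.fourierIntegral_convergent_iff ξ).2 (TT_mul_integrable f (hb.TT K R⁻¹)))]
    congr 1; ext x
    rw [Function.iterate_succ_apply', ← hh, ← smul_sub, ← sub_mul]
    rfl

lemma exists_K : ∃ K : 𝓢(E3, ℂ), (∫ y, K y = 1) ∧
    ∀ ζ : E3, 1 ≤ ‖ζ‖ → 𝓕 (K : E3 → ℂ) ζ = 0 := by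
  let b : ContDiffBump (0 : E3) := ⟨1/2, 1, by norm_num, by norm_num⟩
  have h1 : HasCompactSupport (fun x : E3 => ((b x : ℝ) : ℂ)) :=
    b.hasCompactSupport.comp_left (g := fun t : ℝ => (t : ℂ)) (by simp)
  have h2 : ContDiff ℝ ∞ (fun x : E3 => ((b x : ℝ) : ℂ)) :=
    Complex.ofRealCLM.contDiff.comp b.contDiff
  let B : 𝓢(E3, ℂ) := h1.toSchwartzMap h2
  have hF : ∀ ζ, 𝓕 ((𝓕⁻ B : 𝓢(E3, ℂ)) : E3 → ℂ) ζ = ((b ζ : ℝ) : ℂ) := by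
    intro ζ
    rw [← SchwartzMap.fourier_coe, FourierTransform.fourier_fourierInv_eq]; rfl
  refine ⟨𝓕⁻ B, ?_, fun ζ hζ => ?_⟩
  · have := hF 0
    rw [Real.fourier_eq] at this
    simp only [inner_zero_right, neg_zero, AddChar.map_zero_eq_one, one_smul] at this
    rw [this, b.one_of_mem_closedBall (by simp [b.rIn_pos.le])]; simp
  · rw [hF, b.zero_of_le_dist (by simpa [b] using hζ)]; simp

lemma l2_bound (f : 𝓢(E3, ℂ)) {h : E3 → ℂ} (hb : BS h) {B : ℝ} (hB : ∀ x, ‖h x‖ ≤ B) :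
    eLpNorm (𝓕 (fun x => h x * f x)) 2 volume ≤
      ENNReal.ofReal B * eLpNorm (f : E3 → ℂ) 2 volume := by
  have ht : h.HasTemperateGrowth := by
    refine ⟨hb.1, fun n => ?_⟩
    obtain ⟨C, hC⟩ := hb.2 n
    exact ⟨0, C, fun x => by simpa using hC x⟩
  let P : 𝓢(E3, ℂ) := SchwartzMap.bilinLeftCLM (ContinuousLinearMap.mul ℂ ℂ) ht f
  have hP : (P : E3 → ℂ) = fun x => h x * f x := by
    ext x; exact mul_comm _ _
  have h1 := SchwartzMap.norm_fourier_toL2_eq P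
  rw [SchwartzMap.norm_toLp, SchwartzMap.norm_toLp, ENNReal.toReal_eq_toReal_iff'
    (SchwartzMap.eLpNorm_lt_top _ _ _).ne (SchwartzMap.eLpNorm_lt_top _ _ _).ne,
    SchwartzMap.fourier_coe, hP] at h1
  rw [h1]
  refine eLpNorm_le_mul_eLpNorm_of_ae_le_mul (.of_forall fun x => ?_) 2
  rw [norm_mul]; gcongr; exact hB x

end op

/-- frequency localization of a spatially localized, frequency localized function.
If `𝓕 f` is supported in the ball of radius `3·2^j` and `φ` is a smooth function of "type j"
(support of diameter at most 1 and `m`-th derivatives bounded by `C_m 2^{m j (1-ε)}`), then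
the part of `𝓕(φ f)` living at frequencies `‖ξ‖ > 4·2^j` is negligible:
its `L²` norm is at most `C 2^{-Nj} ‖f‖_{L²}`. -/
theorem stmt4 (ε : ℝ) (hε : 0 < ε) (hε1 : ε < 1) (Cm : ℕ → ℝ) (hCm : ∀ m, 0 < Cm m) :
    ∀ N : ℕ, ∃ C : ℝ, 0 < C ∧
      ∀ (j : ℕ), 1 ≤ j →
        ∀ (f : 𝓢(EuclideanSpace ℝ (Fin 3), ℂ)) (φ : EuclideanSpace ℝ (Fin 3) → ℂ),
          Function.support (𝓕 (f : EuclideanSpace ℝ (Fin 3) → ℂ)) ⊆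
            Metric.closedBall 0 (3 * 2 ^ j) →
          ContDiff ℝ (⊤ : ℕ∞) φ →
          Metric.diam (Function.support φ) ≤ 1 →
          (∀ (m : ℕ) (x : EuclideanSpace ℝ (Fin 3)),
            ‖iteratedFDeriv ℝ m φ x‖ ≤ Cm m * 2 ^ ((m : ℝ) * (j : ℝ) * (1 - ε))) →
          (eLpNorm (𝓕 (fun x => φ x * f x)) 2
              (volume.restrict {ξ : EuclideanSpace ℝ (Fin 3) | 4 * 2 ^ j < ‖ξ‖})).toReal ≤
            C * 2 ^ (-(N : ℝ) * (j : ℝ)) *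
              (eLpNorm (f : EuclideanSpace ℝ (Fin 3) → ℂ) 2 volume).toReal := by
  intro N
  obtain ⟨K, hK1, hK⟩ := exists_K
  obtain ⟨M, hM⟩ := exists_nat_ge ((N : ℝ) / ε)
  rw [div_le_iff₀ hε] at hM
  set c := ∫ y, ‖y‖ * ‖K y‖ with hc
  have hc0 : 0 ≤ c := integral_nonneg fun y => by positivity
  have hCM := hCm M
  refine ⟨c ^ M * Cm M + 1, by positivity, ?_⟩
  intro j _ f φ hf hφ _ hder
  have hR : (0 : ℝ) < 2 ^ j := by positivity
  have hBS : BS φ := ⟨hφ, fun m => ⟨_, hder m⟩⟩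
  have hb := (LL_iter K ((2 : ℝ) ^ j)⁻¹ M hBS).1
  have hle := LL_iter_le K ((2 : ℝ) ^ j)⁻¹ hK1 (by positivity) M hBS (hder M)
  rw [← hc] at hle
  have hexp : (((2 : ℝ) ^ j)⁻¹) ^ M * 2 ^ ((M : ℝ) * (j : ℝ) * (1 - ε))
      ≤ (2 : ℝ) ^ (-(N : ℝ) * (j : ℝ)) := by
    have e : (((2 : ℝ) ^ j)⁻¹) ^ M = (2 : ℝ) ^ (-((M : ℝ) * (j : ℝ))) := by
      rw [Real.rpow_neg (by norm_num), inv_pow, ← pow_mul, mul_comm j M, ← Nat.cast_mul,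
        Real.rpow_natCast]
    rw [e, ← Real.rpow_add (by norm_num)]
    refine Real.rpow_le_rpow_of_exponent_le (by norm_num) ?_
    have : (0 : ℝ) ≤ j := Nat.cast_nonneg j
    nlinarith
  have hle' : ∀ x, ‖(LL K ((2 : ℝ) ^ j)⁻¹)^[M] φ x‖ ≤
      (c ^ M * Cm M + 1) * 2 ^ (-(N : ℝ) * (j : ℝ)) := by
    intro x
    refine (hle x).trans ?_
    calc _ = c ^ M * Cm M * ((((2 : ℝ) ^ j)⁻¹) ^ M * 2 ^ ((M : ℝ) * (j : ℝ) * (1 - ε))) := by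
          rw [mul_pow]; ring
      _ ≤ c ^ M * Cm M * 2 ^ (-(N : ℝ) * (j : ℝ)) := by gcongr
      _ ≤ _ := by gcongr; linarith
  have hmeas : MeasurableSet {ξ : EuclideanSpace ℝ (Fin 3) | 4 * 2 ^ j < ‖ξ‖} :=
    measurableSet_lt measurable_const measurable_norm
  have h1 : eLpNorm (𝓕 (fun x => φ x * f x)) 2
      (volume.restrict {ξ : EuclideanSpace ℝ (Fin 3) | 4 * 2 ^ j < ‖ξ‖}) ≤
      ENNReal.ofReal ((c ^ M * Cm M + 1) * 2 ^ (-(N : ℝ) * (j : ℝ))) *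
        eLpNorm (f : EuclideanSpace ℝ (Fin 3) → ℂ) 2 volume := by
    refine le_trans ?_ (l2_bound f hb hle')
    refine le_trans (le_of_eq ?_) (eLpNorm_mono_measure _ (Measure.restrict_le_self
      (s := {ξ : EuclideanSpace ℝ (Fin 3) | 4 * 2 ^ j < ‖ξ‖})))
    refine eLpNorm_congr_ae ?_
    filter_upwards [ae_restrict_mem hmeas] with ξ hξ
    exact decomp K hR hK f hf ξ hξ hBS M
  have h2 := ENNReal.toReal_mono (ENNReal.mul_ne_top ENNReal.ofReal_ne_top
    (f.eLpNorm_lt_top 2 volume).ne) h1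
  rwa [ENNReal.toReal_mul, ENNReal.toReal_ofReal (by positivity)] at h2
end

section
/- Fix ε ∈ (0,1) and a sequence of positive constants (C_m)_{m∈ℕ}. For every N ∈ ℕ there exists a constant C > 0 such that the following holds for every integer j ≥ 1: if f : ℝ³ → ℂ is a Schwartz function whose Fourier transform is supported in the closed ball of radius 3·2^j about the origin, and φ : ℝ³ → ℂ is a smooth function whose support has diameter at most 1 and which satisfies sup_x ‖(iterated derivative of order m of φ)(x)‖ ≤ C_m · 2^{m·j(1−ε)} for every m ∈ ℕ, then sup_{x∈ℝ³} |φ(x)f(x)| ≤ C · ( 2^{3j/2} · ‖φ·f‖_{L²(ℝ³)} + 2^{-Nj} · ‖f‖_{L²(ℝ³)} ). -/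
open MeasureTheory SchwartzMap
open scoped FourierTransform

local notation "V3" => EuclideanSpace ℝ (Fin 3)

lemma bern_vol (R : ℝ) (hR : 0 ≤ R) : (volume (Metric.closedBall (0:V3) R)).toReal
    = R ^ 3 * (volume (Metric.closedBall (0:V3) 1)).toReal := by
  have := Measure.addHaar_real_closedBall (volume : Measure V3) 0 hR
  simp only [Measure.real, finrank_euclideanSpace, Fintype.card_fin] at this
  rw [this, Measure.addHaar_closedBall_eq_addHaar_ball]

lemma bern_cs (h : 𝓢(V3, ℂ)) (R : ℝ) (hR : 0 ≤ R) :
    ∫ ξ in Metric.closedBall 0 R, ‖h ξ‖ ≤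
      (volume (Metric.closedBall (0:V3) 1)).toReal ^ (1/2:ℝ) * R ^ (3/2:ℝ) * ‖h.toLp 2‖ := by
  have h1 := eLpNorm_le_eLpNorm_mul_rpow_measure_univ (p := 1) (q := 2) (f := h)
    (μ := volume.restrict (Metric.closedBall 0 R)) (by norm_num)
    h.continuous.aestronglyMeasurable
  have h2 : eLpNorm h 2 (volume.restrict (Metric.closedBall 0 R)) ≤ eLpNorm h 2 volume :=
    eLpNorm_mono_measure _ Measure.restrict_le_self
  have hfin : volume (Metric.closedBall (0:V3) R) ≠ ⊤ := measure_closedBall_lt_top.ne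
  have h3 : ∫ ξ in Metric.closedBall 0 R, ‖h ξ‖
      = (eLpNorm h 1 (volume.restrict (Metric.closedBall 0 R))).toReal := by
    rw [eLpNorm_one_eq_lintegral_enorm, integral_norm_eq_lintegral_enorm]
    exact h.continuous.aestronglyMeasurable
  rw [h3, norm_toLp]
  have h4 : eLpNorm h 1 (volume.restrict (Metric.closedBall 0 R)) ≤
      eLpNorm h 2 volume * (volume (Metric.closedBall (0:V3) R)) ^ (1/2:ℝ) := by
    refine h1.trans ?_
    rw [Measure.restrict_apply_univ]
    norm_num
    gcongr
  have h5 : eLpNorm h 2 volume ≠ ⊤ := (h.memLp 2 volume).eLpNorm_ne_top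
  refine (ENNReal.toReal_mono (ENNReal.mul_ne_top h5
    (ENNReal.rpow_ne_top_of_nonneg (by norm_num) hfin)) h4).trans ?_
  rw [ENNReal.toReal_mul, ← ENNReal.toReal_rpow, bern_vol R hR, Real.mul_rpow (by positivity)
    (by positivity), ← Real.rpow_natCast, ← Real.rpow_mul hR]
  apply le_of_eq
  norm_num
  ring

lemma bern_decay (u : 𝓢(V3, ℂ)) (x₀ : V3) (n : ℕ) (M : ℝ)
    (hs : ∀ x, x ∉ Metric.closedBall x₀ 2 → u x = 0)
    (hM : ∀ i ≤ n, ∀ x, ‖iteratedFDeriv ℝ i u x‖ ≤ M) (ξ : V3) :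
    ‖ξ‖ ^ n * ‖𝓕⁻ u ξ‖ ≤
      2 ^ n * ((n + 1) * (M * (volume (Metric.closedBall x₀ 2)).toReal)) := by
  have key := Real.pow_mul_norm_iteratedFDeriv_fourier_le (f := (u : V3 → ℂ)) (K := ⊤) (N := ⊤)
    (by simpa using u.smooth ⊤) (fun k m _ _ => u.integrable_pow_mul_iteratedFDeriv volume k m) (k := 0) (n := n)
    (by simp) (by simp) (-ξ)
  have hF : ‖𝓕⁻ u ξ‖ = ‖𝓕 (u : V3 → ℂ) (-ξ)‖ := by
    rw [fourierInv_coe, Real.fourierInv_eq_fourier_neg]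
  rw [hF]
  simp only [norm_iteratedFDeriv_zero, norm_neg] at key
  refine key.trans ?_
  simp only [pow_zero, one_mul, Nat.cast_zero, mul_zero, zero_add]
  gcongr
  rw [Finset.sum_product]
  simp only [Finset.range_one, Finset.sum_singleton, pow_zero, one_mul]
  refine (Finset.sum_le_card_nsmul _ _ (M * (volume (Metric.closedBall x₀ 2)).toReal) ?_).trans ?_
  · intro i hi
    have hi' : i ≤ n := by simpa [Nat.lt_succ_iff] using hi
    have hsup : ∀ x, x ∉ Metric.closedBall x₀ 2 → ‖iteratedFDeriv ℝ i u x‖ = 0 := by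
      intro x hx
      rw [norm_eq_zero]
      by_contra hne
      have := support_iteratedFDeriv_subset (𝕜 := ℝ) (f := (u : V3 → ℂ)) i
        (Function.mem_support.2 hne)
      refine hx ?_
      refine closure_minimal ?_ Metric.isClosed_closedBall this
      intro y hy
      by_contra hy'
      exact hy (hs y hy')
    rw [← setIntegral_eq_integral_of_forall_compl_eq_zero hsup]
    have := norm_setIntegral_le_of_norm_le_const (μ := (volume : Measure V3)) (s := Metric.closedBall x₀ 2)
      (f := fun x => ‖iteratedFDeriv ℝ i u x‖) (C := M) measure_closedBall_lt_top
      (fun x _ => by simpa using hM i hi' x)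
    exact (le_abs_self _).trans this
  · simp

lemma bern_conv (u f g : 𝓢(V3, ℂ)) (hg : ∀ x, g x = u x * f x) (l D : ℝ) (n : ℕ) (hl : 1 ≤ l)
    (hf : ∀ ξ, ξ ∉ Metric.closedBall 0 (3 * l) → 𝓕⁻ f ξ = 0)
    (hD : ∀ ξ, ‖ξ‖ ^ n * ‖𝓕⁻ u ξ‖ ≤ D) (ξ : V3) (hξ : 4 * l ≤ ‖ξ‖) :
    ‖ξ‖ ^ n * ‖𝓕⁻ g ξ‖ ≤ 4 ^ n * D * ((volume (Metric.closedBall (0:V3) 1)).toReal ^ (1/2:ℝ)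
      * (3 * l) ^ (3/2:ℝ) * ‖f.toLp 2‖) := by
  have h1 : 𝓕⁻ g = SchwartzMap.convolution (ContinuousLinearMap.mul ℂ ℂ) (𝓕⁻ f) (𝓕⁻ u) := by
    have : g = 𝓕 (SchwartzMap.convolution (ContinuousLinearMap.mul ℂ ℂ) (𝓕⁻ f) (𝓕⁻ u)) := by
      rw [fourier_convolution]
      ext x
      simp [hg, mul_comm]
    rw [this]; simp
  have h2 : ‖𝓕⁻ g ξ‖ ≤ ∫ η, ‖𝓕⁻ f η‖ * ‖𝓕⁻ u (ξ - η)‖ := by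
    rw [h1, convolution_apply, MeasureTheory.convolution]
    refine (norm_integral_le_integral_norm _).trans (le_of_eq ?_)
    simp
  have hs : ∀ η, η ∉ Metric.closedBall (0:V3) (3*l) → ‖𝓕⁻ f η‖ * ‖𝓕⁻ u (ξ - η)‖ = 0 := by
    intro η hη; simp [hf η hη]
  rw [← setIntegral_eq_integral_of_forall_compl_eq_zero hs] at h2
  have hint : Integrable (fun η => ‖𝓕⁻ f η‖) (volume.restrict (Metric.closedBall (0:V3) (3*l))) :=
    (𝓕⁻ f).integrable.norm.restrict
  have hn : ‖(𝓕⁻ f).toLp 2‖ = ‖f.toLp 2‖ := by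
    rw [← norm_fourier_toL2_eq (𝓕⁻ f)]; simp
  have hcs := bern_cs (𝓕⁻ f) (3*l) (by linarith)
  rw [hn] at hcs
  have hD0 : 0 ≤ D := le_trans (by positivity) (hD 0)
  calc ‖ξ‖ ^ n * ‖𝓕⁻ g ξ‖
      ≤ ‖ξ‖ ^ n * ∫ η in Metric.closedBall (0:V3) (3*l), ‖𝓕⁻ f η‖ * ‖𝓕⁻ u (ξ - η)‖ := by gcongr
    _ = ∫ η in Metric.closedBall (0:V3) (3*l), ‖ξ‖ ^ n * (‖𝓕⁻ f η‖ * ‖𝓕⁻ u (ξ - η)‖) := by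
        rw [integral_const_mul]
    _ ≤ ∫ η in Metric.closedBall (0:V3) (3*l), (4 ^ n * D) * ‖𝓕⁻ f η‖ := by
        apply integral_mono_of_nonneg
        · exact Filter.Eventually.of_forall fun η => by positivity
        · exact hint.const_mul _
        · filter_upwards [ae_restrict_mem measurableSet_closedBall] with η hη
          have hη' : ‖η‖ ≤ 3 * l := by simpa using hη
          have h5 : ‖ξ‖ ≤ 4 * ‖ξ - η‖ := by
            have := norm_sub_norm_le ξ η
            linarith
          have h6 : ‖ξ‖ ^ n ≤ 4 ^ n * ‖ξ - η‖ ^ n := by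
            rw [← mul_pow]; gcongr
          calc ‖ξ‖ ^ n * (‖𝓕⁻ f η‖ * ‖𝓕⁻ u (ξ - η)‖)
              ≤ (4 ^ n * ‖ξ - η‖ ^ n) * (‖𝓕⁻ f η‖ * ‖𝓕⁻ u (ξ - η)‖) := by gcongr
            _ = 4 ^ n * (‖ξ - η‖ ^ n * ‖𝓕⁻ u (ξ - η)‖) * ‖𝓕⁻ f η‖ := by ring
            _ ≤ 4 ^ n * D * ‖𝓕⁻ f η‖ := by gcongr; exact hD _
    _ = 4 ^ n * D * ∫ η in Metric.closedBall (0:V3) (3*l), ‖𝓕⁻ f η‖ := by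
        rw [integral_const_mul]
    _ ≤ _ := by gcongr

lemma bern_tail (h : 𝓢(V3, ℂ)) (l E : ℝ) (p : ℕ) (hl : 1 ≤ l) (hE0 : 0 ≤ E)
    (hE : ∀ ξ, 4 * l ≤ ‖ξ‖ → ‖ξ‖ ^ (p + 4) * ‖h ξ‖ ≤ E) :
    ∫ ξ, ‖h ξ‖ ≤ (volume (Metric.closedBall (0:V3) 1)).toReal ^ (1/2:ℝ)
      * (4 * l) ^ (3/2:ℝ) * ‖h.toLp 2‖ +
      E * (l ^ p)⁻¹ * 16 * ∫ ξ : V3, (1 + ‖ξ‖) ^ (-4:ℝ) := by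
  rw [← integral_add_compl (s := Metric.closedBall (0:V3) (4*l)) measurableSet_closedBall
    h.integrable.norm]
  gcongr
  · exact bern_cs h (4*l) (by linarith)
  have hJ : Integrable (fun ξ : V3 => (1 + ‖ξ‖) ^ (-4:ℝ)) := by
    apply integrable_one_add_norm
    simp; norm_num
  rw [← integral_const_mul]
  refine (setIntegral_mono_on (g := fun ξ : V3 => E * (l ^ p)⁻¹ * 16 * (1 + ‖ξ‖) ^ (-4:ℝ))
    h.integrable.norm.integrableOn (hJ.const_mul _).integrableOn
    measurableSet_closedBall.compl ?_).trans ?_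
  · intro ξ hξ
    have hξ' : 4 * l ≤ ‖ξ‖ := by
      simp at hξ; exact hξ.le
    have hb := hE ξ hξ'
    have hp : 0 < ‖ξ‖ := by linarith
    have e1 : (1 + ‖ξ‖) ^ (-4:ℝ) = ((1 + ‖ξ‖) ^ 4)⁻¹ := by
      rw [Real.rpow_neg (by positivity)]; norm_cast
    rw [e1]
    have e2 : (1 + ‖ξ‖)^4 ≤ 16 * ‖ξ‖^4 := by
      have : (1 + ‖ξ‖)^4 ≤ (2 * ‖ξ‖)^4 := by gcongr; linarith
      nlinarith
    have e3 : l ^ p ≤ ‖ξ‖ ^ p := by gcongr; linarith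
    have e4 : l ^ p * (1 + ‖ξ‖)^4 * ‖h ξ‖ ≤ E * 16 := by
      calc l ^ p * (1 + ‖ξ‖)^4 * ‖h ξ‖ ≤ ‖ξ‖ ^ p * (16 * ‖ξ‖^4) * ‖h ξ‖ := by gcongr
        _ = 16 * (‖ξ‖ ^ (p + 4) * ‖h ξ‖) := by ring
        _ ≤ _ := by linarith
    have : E * (l ^ p)⁻¹ * 16 * ((1 + ‖ξ‖) ^ 4)⁻¹ = (E * 16) / (l ^ p * (1 + ‖ξ‖)^4) := by
      field_simp
    rw [this, le_div_iff₀ (by positivity)]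
    linarith
  · apply setIntegral_le_integral (hJ.const_mul _)
    exact Filter.Eventually.of_forall fun ξ => by
      simp only [Pi.zero_apply]; positivity

lemma bern_core (u f g : 𝓢(V3, ℂ)) (hg : ∀ x, g x = u x * f x) (l M : ℝ) (p : ℕ) (hl : 1 ≤ l)
    (x₀ : V3) (hM0 : 0 ≤ M)
    (hf : ∀ ξ, ξ ∉ Metric.closedBall 0 (3 * l) → 𝓕⁻ f ξ = 0)
    (hs : ∀ x, x ∉ Metric.closedBall x₀ 2 → u x = 0)
    (hM : ∀ i ≤ p + 4, ∀ x, ‖iteratedFDeriv ℝ i u x‖ ≤ M) (x : V3) :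
    ‖g x‖ ≤ (volume (Metric.closedBall (0:V3) 1)).toReal ^ (1/2:ℝ)
      * (4 * l) ^ (3/2:ℝ) * ‖g.toLp 2‖ +
      (4 ^ (p+4) * (2 ^ (p+4) * (((p+4:ℕ) + 1) * (M * (volume (Metric.closedBall (0:V3) 2)).toReal)))
       * ((volume (Metric.closedBall (0:V3) 1)).toReal ^ (1/2:ℝ)
      * (3 * l) ^ (3/2:ℝ) * ‖f.toLp 2‖)) * (l ^ p)⁻¹ * 16 * ∫ ξ : V3, (1 + ‖ξ‖) ^ (-4:ℝ) := by
  have hD := bern_decay u x₀ (p+4) M hs hM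
  have hc := bern_conv u f g hg l _ (p+4) hl hf hD
  have hn : ‖(𝓕⁻ g).toLp 2‖ = ‖g.toLp 2‖ := by
    rw [← norm_fourier_toL2_eq (𝓕⁻ g)]; simp
  have ht := bern_tail (𝓕⁻ g) l _ p hl (by positivity) hc
  rw [hn, Measure.addHaar_closedBall_center volume x₀] at ht
  refine le_trans ?_ ht
  have := norm_fourier_apply_le_toLp_one (𝓕⁻ g) x
  rw [norm_toLp_one] at this
  simpa using this

set_option maxHeartbeats 2000000 in
theorem stmt5 (ε : ℝ) (hε : 0 < ε) (hε1 : ε < 1) (Cm : ℕ → ℝ) (hCm : ∀ m, 0 < Cm m) :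
    ∀ N : ℕ, ∃ C : ℝ, 0 < C ∧
      ∀ (j : ℕ), 1 ≤ j →
        ∀ (f : 𝓢(EuclideanSpace ℝ (Fin 3), ℂ)) (φ : EuclideanSpace ℝ (Fin 3) → ℂ),
          Function.support (𝓕 (f : EuclideanSpace ℝ (Fin 3) → ℂ)) ⊆
            Metric.closedBall 0 (3 * 2 ^ j) →
          ContDiff ℝ (⊤ : ℕ∞) φ →
          Metric.diam (Function.support φ) ≤ 1 →
          (∀ (m : ℕ) (x : EuclideanSpace ℝ (Fin 3)),
            ‖iteratedFDeriv ℝ m φ x‖ ≤ Cm m * 2 ^ ((m : ℝ) * (j : ℝ) * (1 - ε))) →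
          ∀ x : EuclideanSpace ℝ (Fin 3),
            ‖φ x * f x‖ ≤ C * (2 ^ ((3 * (j : ℝ)) / 2) *
                (eLpNorm (fun y => φ y * f y) 2 volume).toReal +
              2 ^ (-(N : ℝ) * (j : ℝ)) *
                (eLpNorm (f : EuclideanSpace ℝ (Fin 3) → ℂ) 2 volume).toReal) := by
  intro N
  let b : ContDiffBump (0 : V3) := ⟨1, 2, by norm_num, by norm_num⟩
  have hbs : ContDiff ℝ (⊤ : ℕ∞) (fun x : V3 => (b x : ℂ)) :=
    Complex.ofRealCLM.contDiff.comp b.contDiff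
  have hbc : HasCompactSupport (fun x : V3 => (b x : ℂ)) :=
    b.hasCompactSupport.comp_left (g := fun r : ℝ => (r : ℂ)) (by simp)
  choose D hD0 hD using fun k => (hbc.toSchwartzMap hbs).decay 0 k
  simp only [pow_zero, one_mul] at hD
  obtain ⟨p, hp⟩ := exists_nat_ge (((N:ℝ) + 6) / ε)
  rw [div_le_iff₀ hε] at hp
  set B : ℕ → ℝ := fun i => ∑ k ∈ Finset.range (i + 1), (i.choose k : ℝ) * Cm k * D (i - k) with hB
  have hB0 : ∀ i, 0 ≤ B i := fun i => Finset.sum_nonneg fun k _ => by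
    have := (hCm k).le
    have := (hD0 (i - k)).le
    positivity
  set Bm : ℝ := ∑ i ∈ Finset.range (p + 4 + 1), B i with hBm
  have hBm0 : 0 ≤ Bm := Finset.sum_nonneg fun i _ => hB0 i
  set K : ℝ := (volume (Metric.closedBall (0:V3) 1)).toReal ^ (1/2:ℝ) with hK
  have hK0 : 0 ≤ K := by positivity
  set W : ℝ := (volume (Metric.closedBall (0:V3) 2)).toReal with hW
  have hW0 : 0 ≤ W := by positivity
  set J : ℝ := ∫ ξ : V3, (1 + ‖ξ‖) ^ (-4:ℝ) with hJ
  have hJ0 : 0 ≤ J := integral_nonneg fun ξ => by simp only [Pi.zero_apply]; positivity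
  set C1 : ℝ := K * 4 ^ (3/2:ℝ) with hC1
  set C2 : ℝ := 4 ^ (p+4) * (2 ^ (p+4) * (((p+4:ℕ) + 1) * (Bm * W))) * (K * 3 ^ (3/2:ℝ)) * 16 * J
    with hC2
  have hC10 : 0 ≤ C1 := by positivity
  have hC20 : 0 ≤ C2 := by positivity
  refine ⟨C1 + C2 + 1, by positivity, ?_⟩
  intro j hj f φ hf hφ _ hder x₀
  have hl : (1:ℝ) ≤ 2 ^ j := one_le_pow₀ (by norm_num)
  have hχ : ContDiff ℝ (⊤ : ℕ∞) (fun x : V3 => (b (x - x₀) : ℂ)) :=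
    hbs.comp (contDiff_id.sub contDiff_const)
  have hus : ContDiff ℝ (⊤ : ℕ∞) (fun x : V3 => φ x * (b (x - x₀) : ℂ)) := hφ.mul hχ
  have hz : ∀ x, x ∉ Metric.closedBall x₀ 2 → (b (x - x₀) : ℂ) = 0 := by
    intro x hx
    rw [Complex.ofReal_eq_zero]
    apply b.zero_of_le_dist
    simp only [Metric.mem_closedBall, not_le, dist_eq_norm] at hx
    simpa [dist_eq_norm] using hx.le
  have huz : ∀ x, x ∉ Metric.closedBall x₀ 2 → φ x * (b (x - x₀) : ℂ) = 0 := by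
    intro x hx
    rw [hz x hx, mul_zero]
  have huc : HasCompactSupport (fun x : V3 => φ x * (b (x - x₀) : ℂ)) :=
    HasCompactSupport.intro (isCompact_closedBall x₀ 2) (huz)
  have hgs : ContDiff ℝ (⊤ : ℕ∞) (fun x : V3 => φ x * (b (x - x₀) : ℂ) * f x) :=
    hus.mul (f.smooth ⊤)
  have hgc : HasCompactSupport (fun x : V3 => φ x * (b (x - x₀) : ℂ) * f x) :=
    huc.mul_right
  have hM : ∀ i ≤ p + 4, ∀ x, ‖iteratedFDeriv ℝ i (huc.toSchwartzMap hus) x‖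
      ≤ Bm * 2 ^ (((p + 4 : ℕ) : ℝ) * j * (1 - ε)) := by
    intro i hi x
    have h1 := norm_iteratedFDeriv_mul_le hφ hχ x (n := i) (mod_cast le_top)
    have h2 : B i ≤ Bm := Finset.single_le_sum (fun i _ => hB0 i) (by simp; omega)
    refine h1.trans (le_trans ?_ (mul_le_mul_of_nonneg_right h2 (by positivity)))
    rw [hB, Finset.sum_mul]
    apply Finset.sum_le_sum
    intro k hk
    have hk' : k ≤ i := by simpa [Nat.lt_succ_iff] using hk
    have h3 : ‖iteratedFDeriv ℝ (i - k) (fun x : V3 => (b (x - x₀) : ℂ)) x‖ ≤ D (i - k) := by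
      have := iteratedFDeriv_comp_sub (𝕜 := ℝ) (f := fun x : V3 => (b x : ℂ)) (i - k) x₀ x
      rw [this]
      exact hD (i - k) (x - x₀)
    have h4 : (2:ℝ) ^ ((k : ℝ) * (j : ℝ) * (1 - ε)) ≤ 2 ^ (((p + 4 : ℕ) : ℝ) * j * (1 - ε)) := by
      apply Real.rpow_le_rpow_of_exponent_le (by norm_num)
      have : (k:ℝ) ≤ ((p + 4 : ℕ) : ℝ) := by exact_mod_cast hk'.trans hi
      have : 0 ≤ 1 - ε := by linarith
      gcongr
    have h5 := (hder k x).trans (mul_le_mul_of_nonneg_left h4 (hCm k).le)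
    have h6 := (hCm k).le
    calc _ ≤ (i.choose k : ℝ) * (Cm k * 2 ^ (((p + 4 : ℕ) : ℝ) * j * (1 - ε))) * D (i - k) := by
          gcongr
      _ = _ := by ring
  have hfs : ∀ ξ, ξ ∉ Metric.closedBall (0:V3) (3 * 2 ^ j) → 𝓕⁻ f ξ = 0 := by
    intro ξ hξ
    rw [fourierInv_coe, Real.fourierInv_eq_fourier_neg]
    by_contra hne
    have := hf (Function.mem_support.2 hne)
    apply hξ
    simpa using this
  have core := bern_core (huc.toSchwartzMap hus) f (hgc.toSchwartzMap hgs) (fun x => rfl) (2 ^ j)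
    (Bm * 2 ^ (((p + 4 : ℕ) : ℝ) * j * (1 - ε))) p hl x₀ (by positivity) hfs huz hM x₀
  have hbx : b (x₀ - x₀) = 1 := by
    apply b.one_of_mem_closedBall
    simp [b]
  have hgx : (hgc.toSchwartzMap hgs) x₀ = φ x₀ * f x₀ := by
    change φ x₀ * (b (x₀ - x₀) : ℂ) * f x₀ = _
    rw [hbx]; simp
  rw [hgx, norm_toLp, norm_toLp] at core
  have hφf : MemLp (fun y => φ y * f y) 2 volume := by
    refine MemLp.of_le_mul (c := Cm 0) (f.memLp 2 volume)
      (hφ.continuous.mul f.continuous).aestronglyMeasurable (Filter.Eventually.of_forall fun y => ?_)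
    have := hder 0 y
    simp at this
    rw [norm_mul]
    gcongr
  have hgle : (eLpNorm (hgc.toSchwartzMap hgs) 2 volume).toReal
      ≤ (eLpNorm (fun y => φ y * f y) 2 volume).toReal := by
    apply ENNReal.toReal_mono hφf.eLpNorm_ne_top
    apply eLpNorm_mono
    intro y
    change ‖φ y * (b (y - x₀) : ℂ) * f y‖ ≤ _
    rw [norm_mul, norm_mul, norm_mul]
    have : ‖(b (y - x₀) : ℂ)‖ ≤ 1 := by
      rw [Complex.norm_real, Real.norm_of_nonneg b.nonneg]; exact b.le_one
    gcongr
    exact mul_le_of_le_one_right (norm_nonneg _) this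
  set G := (eLpNorm (hgc.toSchwartzMap hgs) 2 volume).toReal with hG
  set A := (eLpNorm (fun y => φ y * f y) 2 volume).toReal with hA
  set F := (eLpNorm (f : V3 → ℂ) 2 volume).toReal with hF
  have hA0 : 0 ≤ A := ENNReal.toReal_nonneg
  have hF0 : 0 ≤ F := ENNReal.toReal_nonneg
  have e1 : ((2:ℝ) ^ j) ^ (3/2:ℝ) = 2 ^ ((3 * (j : ℝ)) / 2) := by
    rw [← Real.rpow_natCast, ← Real.rpow_mul (by norm_num)]; congr 1; ring
  have e2 : (2:ℝ) ^ (((p + 4 : ℕ) : ℝ) * j * (1 - ε)) * 2 ^ ((3 * (j : ℝ)) / 2) * (((2:ℝ) ^ j) ^ p)⁻¹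
      ≤ 2 ^ (-(N : ℝ) * (j : ℝ)) := by
    have : (((2:ℝ) ^ j) ^ p)⁻¹ = 2 ^ (-((j:ℝ) * p)) := by
      rw [Real.rpow_neg (by norm_num), ← pow_mul, ← Real.rpow_natCast]; push_cast; rfl
    rw [this, ← Real.rpow_add (by norm_num), ← Real.rpow_add (by norm_num)]
    apply Real.rpow_le_rpow_of_exponent_le (by norm_num)
    push_cast
    have hj0 : (0:ℝ) ≤ j := Nat.cast_nonneg j
    have : ((p:ℝ) + 4) * (1 - ε) + 3 / 2 - p ≤ - N := by nlinarith
    nlinarith [mul_le_mul_of_nonneg_left this hj0]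
  rw [Real.mul_rpow (by norm_num) (by positivity), Real.mul_rpow (by norm_num) (by positivity), e1]
    at core
  set P := (2:ℝ) ^ ((3 * (j : ℝ)) / 2) with hP
  set Q := (2:ℝ) ^ (-(N : ℝ) * (j : ℝ)) with hQ
  have hP0 : 0 ≤ P := by positivity
  have hQ0 : 0 ≤ Q := by positivity
  have t1 : C1 * (P * G) ≤ C1 * (P * A) := by gcongr
  have t2 := mul_le_mul_of_nonneg_left e2 (mul_nonneg hC20 hF0)
  have hfin : ‖φ x₀ * f x₀‖ ≤ C1 * (P * A) + C2 * (Q * F) := by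
    refine core.trans ?_
    refine le_trans (le_of_eq ?_) (add_le_add t1 (t2.trans (le_of_eq (by ring))))
    rw [hC1, hC2]
    ring
  have q1 := mul_nonneg hP0 hA0
  have q2 := mul_nonneg hQ0 hF0
  nlinarith [mul_nonneg hC10 q2, mul_nonneg hC20 q1]
end

section
/- Let α and ε be positive reals with 4α − 4 > 200ε, and let A ≥ 1. Suppose that for each j ∈ ℕ, 𝒬_j is a finite collection of axis-parallel cubes in ℝ³ of sidelength 2^{-(1-2ε)j} with #(𝒬_j) ≤ A·2^{(5-4α+100ε)j}. Then there is a constant C (depending only on α and ε) and, for each j ∈ ℕ, a collection 𝒬′_j of axis-parallel cubes of sidelength 2^{-(1-2ε)j} with #(𝒬′_j) ≤ C·A·2^{(5-4α+100ε)j}, such that: for every j and every axis-parallel cube Q of sidelength 2^{-(1-2ε)j} which intersects no element of 𝒬′_j, there exists a real number r with 1/2 < r < 1 such that for every k > j and every Q̃ ∈ 𝒬_k one has 100Q̃ ∩ ∂(rQ) = ∅. -/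
open Set

/-- The axis-parallel cube in `ℝ³` with center `c` and sidelength `s`:
`{x : ‖x - c‖_∞ ≤ s/2}` (the norm on `Fin 3 → ℝ` is the sup norm).
The dilate `rQ` of `Q = cube3 c s` is `cube3 c (r*s)`, and `∂(rQ)` is its
topological frontier. -/
def cube3 (c : Fin 3 → ℝ) (s : ℝ) : Set (Fin 3 → ℝ) := {x | ‖x - c‖ ≤ s / 2}

lemma pack3 (S : Finset (Fin 3 → ℝ)) (c : Fin 3 → ℝ) (s t : ℝ) (hs : 0 < s) (ht : 0 < t)
    (hsep : ∀ x ∈ S, ∀ y ∈ S, x ≠ y → s < ‖x - y‖)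
    (hn : ∀ x ∈ S, ‖c - x‖ ≤ s / 2 + 50 * t) :
    (S.card : ℝ) ≤ (100 * (t / s) + 3) ^ 3 := by
  classical
  set R := s / 2 + 50 * t with hR
  let B : Finset (Fin 3 → ℤ) :=
    Fintype.piFinset (fun i => Finset.Icc ⌊(c i - R) / s⌋ ⌊(c i + R) / s⌋)
  have h1 : S.card ≤ B.card := by
    refine Finset.card_le_card_of_injOn (fun x i => ⌊x i / s⌋) ?_ ?_
    · intro x hx
      simp only [B, Finset.mem_coe, Fintype.mem_piFinset, Finset.mem_Icc]
      intro i
      have h2 : |c i - x i| ≤ R := by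
        have := norm_le_pi_norm (c - x) i
        simp only [Pi.sub_apply, Real.norm_eq_abs] at this
        exact this.trans (hn x hx)
      rw [abs_le] at h2
      constructor
      · apply Int.floor_le_floor
        gcongr
        linarith
      · apply Int.floor_le_floor
        gcongr
        linarith
    · intro x hx y hy hxy
      by_contra hne
      have h3 := hsep x hx y hy hne
      have h4 : ‖x - y‖ ≤ s := by
        rw [pi_norm_le_iff_of_nonneg hs.le]
        intro i
        have h5 : ⌊x i / s⌋ = ⌊y i / s⌋ := congrFun hxy i
        have h6 := Int.abs_sub_lt_one_of_floor_eq_floor h5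
        rw [← sub_div, abs_div, abs_of_pos hs, div_lt_one hs] at h6
        simpa using h6.le
      linarith
  have h2 : (B.card : ℝ) = ∏ i : Fin 3, ((Finset.Icc ⌊(c i - R) / s⌋ ⌊(c i + R) / s⌋).card : ℝ) := by
    simp [B, Fintype.card_piFinset]
  have h3 : ∀ i : Fin 3, ((Finset.Icc ⌊(c i - R) / s⌋ ⌊(c i + R) / s⌋).card : ℝ)
      ≤ 100 * (t / s) + 3 := by
    intro i
    rw [Int.card_Icc]
    have h4 : (c i - R) / s ≤ (c i + R) / s := by
      gcongr
      have : 0 < R := by positivity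
      linarith
    have h5 := Int.floor_le_floor h4
    have h6 : (((⌊(c i + R) / s⌋ + 1 - ⌊(c i - R) / s⌋).toNat : ℤ) : ℝ)
        = ((⌊(c i + R) / s⌋ + 1 - ⌊(c i - R) / s⌋ : ℤ) : ℝ) := by
      rw [Int.toNat_of_nonneg (by omega)]
    rw [Int.cast_natCast] at h6
    rw [h6]
    push_cast
    have h7 := Int.floor_le ((c i + R) / s)
    have h8 := Int.lt_floor_add_one ((c i - R) / s)
    have h9 : (c i + R) / s - (c i - R) / s = 100 * (t / s) + 1 := by
      rw [hR]; field_simp; ring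
    linarith
  calc (S.card : ℝ) ≤ B.card := by exact_mod_cast h1
    _ = _ := h2
    _ ≤ ∏ i : Fin 3, (100 * (t / s) + 3) := Finset.prod_le_prod (fun _ _ => by positivity) (fun i _ => h3 i)
    _ = _ := by simp

lemma hit3 (c q : Fin 3 → ℝ) (s t r : ℝ) (hs : 0 < s) (hr : 1 / 2 < r) (hr1 : r < 1)
    (h : cube3 c (100 * t) ∩ frontier (cube3 q (r * s)) ≠ ∅) :
    ‖c - q‖ ≤ s / 2 + 50 * t ∧
      r ∈ Icc (2 * ‖c - q‖ / s - 100 * (t / s)) (2 * ‖c - q‖ / s + 100 * (t / s)) := by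
  obtain ⟨x, hx, hx2⟩ := Set.nonempty_iff_ne_empty.2 h
  have e : cube3 q (r * s) = Metric.closedBall q (r * s / 2) := by
    ext y; simp [cube3, dist_eq_norm]
  rw [e] at hx2
  have h1 := Metric.frontier_closedBall_subset_sphere hx2
  rw [mem_sphere_iff_norm] at h1
  have h2 : ‖x - c‖ ≤ 100 * t / 2 := hx
  have h3 : ‖c - q‖ ≤ ‖x - c‖ + ‖x - q‖ := by
    rw [norm_sub_rev x c]
    simpa using norm_add_le (c - x) (x - q)
  have h4 : ‖x - q‖ ≤ ‖x - c‖ + ‖c - q‖ := by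
    simpa using norm_add_le (x - c) (c - q)
  have h5 : r * s < s := by nlinarith
  have e2 : 2 * ‖c - q‖ / s - 100 * (t / s) = (2 * ‖c - q‖ - 100 * t) / s := by ring
  have e3 : 2 * ‖c - q‖ / s + 100 * (t / s) = (2 * ‖c - q‖ + 100 * t) / s := by ring
  refine ⟨by linarith, ?_, ?_⟩
  · rw [e2, div_le_iff₀ hs]; linarith
  · rw [e3, le_div_iff₀ hs]; linarith

lemma summ3 (α ε : ℝ) (hε : 0 < ε) (h : 4 * α - 4 > 200 * ε) :
    Summable (fun m : ℕ => (2 : ℝ) ^ ((5 - 4 * α + 100 * ε) * ((m : ℝ) + 1)) *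
      (200 * (2 : ℝ) ^ (-(1 - 2 * ε) * ((m : ℝ) + 1)) *
        (100 * (2 : ℝ) ^ (-(1 - 2 * ε) * ((m : ℝ) + 1)) + 3) ^ 3)) := by
  have key : ∀ x : ℝ, x < 0 → Summable (fun m : ℕ => (2 : ℝ) ^ (x * ((m : ℝ) + 1))) := by
    intro x hx
    have h1 : Summable (fun m : ℕ => ((2 : ℝ) ^ x) ^ m) :=
      summable_geometric_of_lt_one (by positivity) (Real.rpow_lt_one_of_one_lt_of_neg (by norm_num) hx)
    refine (h1.mul_left ((2 : ℝ) ^ x)).congr ?_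
    intro m
    rw [← Real.rpow_natCast, ← Real.rpow_mul (by norm_num), ← Real.rpow_add (by norm_num)]
    congr 1; ring
  have k1 := key ((5 - 4 * α + 100 * ε) + (-(1 - 2 * ε))) (by linarith)
  have k2 := key ((5 - 4 * α + 100 * ε) + 4 * (-(1 - 2 * ε))) (by linarith)
  refine Summable.of_nonneg_of_le (fun m => by positivity) (fun m => ?_)
    ((k1.mul_left (800 * 27)).add (k2.mul_left (800 * 10 ^ 6)))
  have e1 : (2 : ℝ) ^ (((5 - 4 * α + 100 * ε) + (-(1 - 2 * ε))) * ((m : ℝ) + 1))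
      = (2 : ℝ) ^ ((5 - 4 * α + 100 * ε) * ((m : ℝ) + 1)) *
        (2 : ℝ) ^ (-(1 - 2 * ε) * ((m : ℝ) + 1)) := by
    rw [← Real.rpow_add (by norm_num)]; congr 1; ring
  have e2 : (2 : ℝ) ^ (((5 - 4 * α + 100 * ε) + 4 * (-(1 - 2 * ε))) * ((m : ℝ) + 1))
      = (2 : ℝ) ^ ((5 - 4 * α + 100 * ε) * ((m : ℝ) + 1)) *
        ((2 : ℝ) ^ (-(1 - 2 * ε) * ((m : ℝ) + 1))) ^ 4 := by
    rw [← Real.rpow_natCast, ← Real.rpow_mul (by norm_num), ← Real.rpow_add (by norm_num)]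
    congr 1; push_cast; ring
  rw [e1, e2]
  have hp : (0 : ℝ) < (2 : ℝ) ^ (-(1 - 2 * ε) * ((m : ℝ) + 1)) := by positivity
  have hE : (0 : ℝ) < (2 : ℝ) ^ ((5 - 4 * α + 100 * ε) * ((m : ℝ) + 1)) := by positivity
  generalize (2 : ℝ) ^ (-(1 - 2 * ε) * ((m : ℝ) + 1)) = p at *
  generalize (2 : ℝ) ^ ((5 - 4 * α + 100 * ε) * ((m : ℝ) + 1)) = u at *
  have h3 : (100 * p + 3) ^ 3 ≤ 4 * (10 ^ 6 * p ^ 3 + 27) := by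
    nlinarith [mul_nonneg (add_pos (mul_pos (by norm_num : (0:ℝ) < 100) hp)
      (by norm_num : (0:ℝ) < 3)).le (sq_nonneg (100 * p - 3))]
  calc u * (200 * p * (100 * p + 3) ^ 3) ≤ u * (200 * p * (4 * (10 ^ 6 * p ^ 3 + 27))) := by gcongr
    _ = _ := by ring

open MeasureTheory in
lemma count3 (S : Finset (Fin 3 → ℝ)) (F : ℕ → Finset (Fin 3 → ℝ)) (s : ℝ) (t g : ℕ → ℝ) (D : ℝ)
    (hs : 0 < s) (ht : ∀ m, 0 < t m) (hD : 0 < D)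
    (hsep : ∀ x ∈ S, ∀ y ∈ S, x ≠ y → s < ‖x - y‖)
    (hbad : ∀ q ∈ S, ∀ r : ℝ, 1 / 2 < r → r < 1 → ∃ m, ∃ c ∈ F m,
      cube3 c (100 * t m) ∩ frontier (cube3 q (r * s)) ≠ ∅)
    (hg : Summable g) (hg0 : ∀ m, 0 ≤ g m)
    (hF : ∀ m, ((F m).card : ℝ) * (200 * (t m / s) * (100 * (t m / s) + 3) ^ 3) ≤ D * g m) :
    (S.card : ℝ) ≤ 2 * (D * ∑' m, g m) := by
  classical
  let w : ℕ → (Fin 3 → ℝ) → (Fin 3 → ℝ) → ENNReal := fun m c q =>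
    if ‖c - q‖ ≤ s / 2 + 50 * t m then ENNReal.ofReal (200 * (t m / s)) else 0
  have h1 : ∀ q ∈ S, ENNReal.ofReal (1 / 2) ≤ ∑' m, ∑ c ∈ F m, w m c q := by
    intro q hq
    let I : ℕ → (Fin 3 → ℝ) → Set ℝ := fun m c =>
      if ‖c - q‖ ≤ s / 2 + 50 * t m then
        Icc (2 * ‖c - q‖ / s - 100 * (t m / s)) (2 * ‖c - q‖ / s + 100 * (t m / s)) else ∅
    have hsub : Ioo (1 / 2 : ℝ) 1 ⊆ ⋃ m, ⋃ c ∈ F m, I m c := by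
      intro r hr
      obtain ⟨m, c, hc, hne⟩ := hbad q hq r hr.1 hr.2
      obtain ⟨ha, hb⟩ := hit3 c q s (t m) r hs hr.1 hr.2 hne
      simp only [mem_iUnion]
      refine ⟨m, c, hc, ?_⟩
      simp only [I, if_pos ha]
      exact hb
    calc ENNReal.ofReal (1 / 2) = volume (Ioo (1 / 2 : ℝ) 1) := by
          rw [Real.volume_Ioo]; norm_num
      _ ≤ volume (⋃ m, ⋃ c ∈ F m, I m c) := measure_mono hsub
      _ ≤ ∑' m, volume (⋃ c ∈ F m, I m c) := measure_iUnion_le _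
      _ ≤ ∑' m, ∑ c ∈ F m, w m c q := by
          refine ENNReal.tsum_le_tsum fun m => (measure_biUnion_finset_le _ _).trans ?_
          refine Finset.sum_le_sum fun c _ => ?_
          simp only [I, w]
          split_ifs
          · rw [Real.volume_Icc]
            apply ENNReal.ofReal_le_ofReal
            linarith
          · simp
  have h2 : (S.card : ENNReal) * ENNReal.ofReal (1 / 2) ≤ ENNReal.ofReal (D * ∑' m, g m) := by
    calc (S.card : ENNReal) * ENNReal.ofReal (1 / 2) = ∑ q ∈ S, ENNReal.ofReal (1 / 2) := by
          rw [Finset.sum_const, nsmul_eq_mul]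
      _ ≤ ∑ q ∈ S, ∑' m, ∑ c ∈ F m, w m c q := Finset.sum_le_sum h1
      _ = ∑' m, ∑ q ∈ S, ∑ c ∈ F m, w m c q :=
          (Summable.tsum_finsetSum (fun _ _ => ENNReal.summable)).symm
      _ ≤ ∑' m, ENNReal.ofReal (D * g m) := by
          refine ENNReal.tsum_le_tsum fun m => ?_
          rw [Finset.sum_comm]
          have h3 : ∀ c ∈ F m, ∑ q ∈ S, w m c q ≤
              ENNReal.ofReal (200 * (t m / s) * (100 * (t m / s) + 3) ^ 3) := by
            intro c _
            simp only [w]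
            rw [← Finset.sum_filter, Finset.sum_const, nsmul_eq_mul, ← ENNReal.ofReal_natCast,
              ← ENNReal.ofReal_mul (by positivity)]
            apply ENNReal.ofReal_le_ofReal
            rw [mul_comm]
            have htm := ht m
            gcongr
            apply pack3 _ c s (t m) hs (ht m)
            · intro x hx y hy
              exact hsep x (Finset.mem_filter.1 hx).1 y (Finset.mem_filter.1 hy).1
            · intro x hx
              exact (Finset.mem_filter.1 hx).2
          refine (Finset.sum_le_sum h3).trans ?_
          rw [Finset.sum_const, nsmul_eq_mul, ← ENNReal.ofReal_natCast,
              ← ENNReal.ofReal_mul (by positivity)]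
          exact ENNReal.ofReal_le_ofReal (hF m)
      _ = ENNReal.ofReal (D * ∑' m, g m) := by
          rw [← tsum_mul_left, ENNReal.ofReal_tsum_of_nonneg]
          · intro m; exact mul_nonneg hD.le (hg0 m)
          · exact hg.mul_left D
  rw [← ENNReal.ofReal_natCast, ← ENNReal.ofReal_mul (by positivity)] at h2
  have h3 := (ENNReal.ofReal_le_ofReal_iff (mul_nonneg hD.le (tsum_nonneg hg0))).1 h2
  linarith

lemma maxsep3 (P : (Fin 3 → ℝ) → Prop) (s N : ℝ)
    (hN : ∀ S : Finset (Fin 3 → ℝ), (∀ x ∈ S, P x) →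
      (∀ x ∈ S, ∀ y ∈ S, x ≠ y → s < ‖x - y‖) → (S.card : ℝ) ≤ N) (hs : 0 < s) :
    ∃ S : Finset (Fin 3 → ℝ), (S.card : ℝ) ≤ N ∧
      ∀ q, P q → ∃ c ∈ S, ‖q - c‖ ≤ s := by
  classical
  let T : ℕ → Prop := fun n => ∃ S : Finset (Fin 3 → ℝ), (∀ x ∈ S, P x) ∧
      (∀ x ∈ S, ∀ y ∈ S, x ≠ y → s < ‖x - y‖) ∧ S.card = n
  have hT0 : T 0 := ⟨∅, by simp⟩
  have hTb : ∀ n, T n → n ≤ ⌊N⌋₊ := by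
    rintro n ⟨S, h1, h2, rfl⟩
    exact Nat.le_floor (hN S h1 h2)
  obtain ⟨S, h1, h2, h3⟩ : T (Nat.findGreatest T ⌊N⌋₊) :=
    Nat.findGreatest_spec (Nat.zero_le _) hT0
  refine ⟨S, hN S h1 h2, ?_⟩
  intro q hq
  by_contra! hcon
  have hqS : q ∉ S := fun hm => by
    have := hcon q hm
    simp at this
    linarith
  have hT : T (S.card + 1) := by
    refine ⟨insert q S, ?_, ?_, Finset.card_insert_of_notMem hqS⟩
    · intro x hx
      rcases Finset.mem_insert.1 hx with rfl | hx
      · exact hq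
      · exact h1 x hx
    · intro x hx y hy hxy
      rcases Finset.mem_insert.1 hx with hx1 | hx1 <;> rcases Finset.mem_insert.1 hy with hy1 | hy1
      · exact absurd (hx1.trans hy1.symm) hxy
      · rw [hx1]; exact hcon y hy1
      · rw [norm_sub_rev, hy1]; exact hcon x hx1
      · exact h2 x hx1 y hy1 hxy
  have := Nat.le_findGreatest (hTb _ hT) hT
  omega

/-- Theorem `nopaths`: let `4α - 4 > 200ε` with `α, ε > 0`. There is a constant
`C` (depending only on `α` and `ε`) such that whenever `A ≥ 1` and, for each `j`, `𝒬 j` is a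
finite collection of axis-parallel cubes of sidelength `2^{-(1-2ε)j}` (recorded by their
centers) with `#𝒬_j ≤ A·2^{(5-4α+100ε)j}`, there exist collections `𝒬′ j` of cubes of
sidelength `2^{-(1-2ε)j}` with `#𝒬′_j ≤ C·A·2^{(5-4α+100ε)j}` such that: for every `j` and
every cube `Q` of sidelength `2^{-(1-2ε)j}` intersecting no element of `𝒬′ j`, there is
`1/2 < r < 1` such that for every `k > j` and every `Q̃ ∈ 𝒬 k`,
`100·Q̃ ∩ ∂(rQ) = ∅`. -/
theorem stmt8 (α ε : ℝ) (hα : 0 < α) (hε : 0 < ε) (h : 4 * α - 4 > 200 * ε) :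
    ∃ C : ℝ, 0 < C ∧
      ∀ (A : ℝ), 1 ≤ A →
        ∀ (Q : ℕ → Set (Fin 3 → ℝ)),
          (∀ j, (Q j).Finite) →
          (∀ j, ((Q j).ncard : ℝ) ≤ A * 2 ^ ((5 - 4 * α + 100 * ε) * (j : ℝ))) →
          ∃ Q' : ℕ → Set (Fin 3 → ℝ),
            (∀ j, (Q' j).Finite ∧
              ((Q' j).ncard : ℝ) ≤ C * A * 2 ^ ((5 - 4 * α + 100 * ε) * (j : ℝ))) ∧
            ∀ (j : ℕ) (q : Fin 3 → ℝ),
              (∀ c ∈ Q' j,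
                cube3 q ((2 : ℝ) ^ (-(1 - 2 * ε) * (j : ℝ))) ∩
                  cube3 c ((2 : ℝ) ^ (-(1 - 2 * ε) * (j : ℝ))) = ∅) →
              ∃ r : ℝ, 1 / 2 < r ∧ r < 1 ∧
                ∀ (k : ℕ), j < k → ∀ c ∈ Q k,
                  cube3 c (100 * (2 : ℝ) ^ (-(1 - 2 * ε) * (k : ℝ))) ∩
                    frontier (cube3 q (r * (2 : ℝ) ^ (-(1 - 2 * ε) * (j : ℝ)))) = ∅ := by
  set g : ℕ → ℝ := fun m : ℕ => (2 : ℝ) ^ ((5 - 4 * α + 100 * ε) * ((m : ℝ) + 1)) *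
      (200 * (2 : ℝ) ^ (-(1 - 2 * ε) * ((m : ℝ) + 1)) *
        (100 * (2 : ℝ) ^ (-(1 - 2 * ε) * ((m : ℝ) + 1)) + 3) ^ 3) with hgdef
  have hg : Summable g := summ3 α ε hε h
  have hg0 : ∀ m, 0 ≤ g m := fun m => by simp only [g]; positivity
  have hG : 0 ≤ ∑' m, g m := tsum_nonneg hg0
  refine ⟨2 * (∑' m, g m) + 1, by linarith, ?_⟩
  intro A hA Q hQf hQc
  have main : ∀ j : ℕ, ∃ S : Finset (Fin 3 → ℝ),
      (S.card : ℝ) ≤ (2 * (∑' m, g m) + 1) * A * 2 ^ ((5 - 4 * α + 100 * ε) * (j : ℝ)) ∧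
      ∀ q, (¬ ∃ r : ℝ, 1 / 2 < r ∧ r < 1 ∧
                ∀ (k : ℕ), j < k → ∀ c ∈ Q k,
                  cube3 c (100 * (2 : ℝ) ^ (-(1 - 2 * ε) * (k : ℝ))) ∩
                    frontier (cube3 q (r * (2 : ℝ) ^ (-(1 - 2 * ε) * (j : ℝ)))) = ∅) →
        ∃ c ∈ S, ‖q - c‖ ≤ (2 : ℝ) ^ (-(1 - 2 * ε) * (j : ℝ)) := by
    intro j
    refine maxsep3 _ _ _ ?_ (by positivity)
    intro S hS hsep
    have hD : 0 < A * (2 : ℝ) ^ ((5 - 4 * α + 100 * ε) * (j : ℝ)) := by positivity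
    have := count3 S (fun m => (hQf (j + 1 + m)).toFinset) ((2 : ℝ) ^ (-(1 - 2 * ε) * (j : ℝ)))
      (fun m => (2 : ℝ) ^ (-(1 - 2 * ε) * ((j + 1 + m : ℕ) : ℝ))) g
      (A * (2 : ℝ) ^ ((5 - 4 * α + 100 * ε) * (j : ℝ)))
      (by positivity) (fun m => by positivity) hD hsep ?_ hg hg0 ?_
    · nlinarith
    · intro q hq r hr hr1
      have h1 := hS q hq
      push Not at h1
      obtain ⟨k, hk, c, hc, hne⟩ := h1 r hr hr1
      refine ⟨k - (j + 1), c, ?_, ?_⟩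
      · rw [show j + 1 + (k - (j + 1)) = k by omega]
        simpa using hc
      · rw [show j + 1 + (k - (j + 1)) = k by omega]
        exact Set.nonempty_iff_ne_empty.1 hne
    · intro m
      have e : (2 : ℝ) ^ (-(1 - 2 * ε) * ((j + 1 + m : ℕ) : ℝ)) /
          (2 : ℝ) ^ (-(1 - 2 * ε) * (j : ℝ)) = (2 : ℝ) ^ (-(1 - 2 * ε) * ((m : ℝ) + 1)) := by
        rw [← Real.rpow_sub (by norm_num)]; congr 1; push_cast; ring
      have e2 : (2 : ℝ) ^ ((5 - 4 * α + 100 * ε) * ((j + 1 + m : ℕ) : ℝ)) =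
          (2 : ℝ) ^ ((5 - 4 * α + 100 * ε) * (j : ℝ)) *
          (2 : ℝ) ^ ((5 - 4 * α + 100 * ε) * ((m : ℝ) + 1)) := by
        rw [← Real.rpow_add (by norm_num)]; congr 1; push_cast; ring
      have hc := hQc (j + 1 + m)
      rw [Set.ncard_eq_toFinset_card _ (hQf (j + 1 + m)), e2] at hc
      simp only [e, g]
      rw [← mul_assoc (A * _)]
      refine mul_le_mul_of_nonneg_right ?_ (by positivity)
      rw [mul_assoc]
      exact hc
  choose S hS1 hS2 using main
  refine ⟨fun j => (S j : Set (Fin 3 → ℝ)), fun j => ⟨(S j).finite_toSet, ?_⟩, ?_⟩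
  · rw [Set.ncard_coe_finset]; exact hS1 j
  · intro j q hq
    by_contra hcon
    obtain ⟨c, hc, hle⟩ := hS2 j q hcon
    have h1 := hq c hc
    have h2 : (2⁻¹ : ℝ) • (q + c) ∈ (∅ : Set (Fin 3 → ℝ)) := by
      rw [← h1]
      constructor
      · have e : (2⁻¹ : ℝ) • (q + c) - q = (-2⁻¹ : ℝ) • (q - c) := by
          ext i; simp; ring
        change ‖_‖ ≤ _
        have hh : ‖(-2⁻¹ : ℝ)‖ = 1 / 2 := by norm_num
        rw [e, norm_smul, hh]
        linarith
      · have e : (2⁻¹ : ℝ) • (q + c) - c = (2⁻¹ : ℝ) • (q - c) := by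
          ext i; simp; ring
        change ‖_‖ ≤ _
        have hh : ‖(2⁻¹ : ℝ)‖ = 1 / 2 := by norm_num
        rw [e, norm_smul, hh]
        linarith
    exact h2
end

section
/- Let Q ⊂ ℝ³ be an axis-parallel cube of sidelength s > 0. For each k ∈ ℕ let 𝒟_k be a finite collection of axis-parallel cubes of sidelength t_k > 0, and suppose that Σ_k #(𝒟_k) · (400·t_k/s) < 1/2. Then there exists a real number r with 1/2 < r < 1 such that for every k and every Q′ ∈ 𝒟_k, 100Q′ ∩ ∂(rQ) = ∅. -/
open Set

/-- let `Q` be a cube of sidelength `s > 0` (center `q`), and for each `k` let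
`D k` be a finite collection of cubes of sidelength `t k > 0` (recorded by their centers).
If `Σ_k #(D k)·(400·t_k/s) < 1/2`, then there is `1/2 < r < 1` such that
`100Q′ ∩ ∂(rQ) = ∅` for every `k` and every `Q′ ∈ D k`. -/
theorem stmt9 (q : Fin 3 → ℝ) (s : ℝ) (hs : 0 < s)
    (D : ℕ → Set (Fin 3 → ℝ)) (t : ℕ → ℝ)
    (hD : ∀ k, (D k).Finite) (ht : ∀ k, 0 < t k)
    (hsum : ∑' k, ((D k).ncard : ENNReal) * ENNReal.ofReal (400 * t k / s) < 1 / 2) :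
    ∃ r : ℝ, 1 / 2 < r ∧ r < 1 ∧
      ∀ k, ∀ c ∈ D k, cube3 c (100 * t k) ∩ frontier (cube3 q (r * s)) = ∅ := by
  have key : ∀ (k : ℕ) (c : Fin 3 → ℝ) (r : ℝ), 0 < r →
      (cube3 c (100 * t k) ∩ frontier (cube3 q (r * s))).Nonempty →
      r ∈ Icc (2 * ‖c - q‖ / s - 200 * t k / s) (2 * ‖c - q‖ / s + 200 * t k / s) := by
    rintro k c r hr ⟨x, hx1, hx2⟩
    have e : cube3 q (r * s) = Metric.closedBall q (r * s / 2) := by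
      ext y
      simp [cube3, dist_eq_norm]
    rw [e] at hx2
    have hx3 := Metric.frontier_closedBall_subset_sphere hx2
    rw [mem_sphere_iff_norm] at hx3
    have hx1' : ‖x - c‖ ≤ 100 * t k / 2 := hx1
    have h1 := norm_sub_norm_le (x - q) (c - q)
    have h2 := norm_sub_norm_le (c - q) (x - q)
    rw [sub_sub_sub_cancel_right] at h1 h2
    rw [norm_sub_rev c x] at h2
    have h4 := ht k
    constructor
    · rw [← sub_div, div_le_iff₀ hs]
      linarith
    · rw [← add_div, le_div_iff₀ hs]
      linarith
  by_contra hcon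
  push Not at hcon
  have hsub : Ioo (1 / 2 : ℝ) 1 ⊆ ⋃ k, ⋃ c ∈ D k,
      Icc (2 * ‖c - q‖ / s - 200 * t k / s) (2 * ‖c - q‖ / s + 200 * t k / s) := by
    rintro r ⟨hr1, hr2⟩
    obtain ⟨k, c, hc, hne⟩ := hcon r hr1 hr2
    simp only [mem_iUnion]
    exact ⟨k, c, hc, key k c r (by linarith) hne⟩
  have hle := MeasureTheory.measure_mono (μ := MeasureTheory.volume) hsub
  have hbound : MeasureTheory.volume (⋃ k, ⋃ c ∈ D k,
      Icc (2 * ‖c - q‖ / s - 200 * t k / s) (2 * ‖c - q‖ / s + 200 * t k / s))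
      ≤ ∑' k, ((D k).ncard : ENNReal) * ENNReal.ofReal (400 * t k / s) := by
    refine (MeasureTheory.measure_iUnion_le _).trans (ENNReal.tsum_le_tsum fun k => ?_)
    have h := MeasureTheory.measure_biUnion_finset_le (μ := MeasureTheory.volume) (hD k).toFinset
      (fun c : Fin 3 → ℝ =>
        Icc (2 * ‖c - q‖ / s - 200 * t k / s) (2 * ‖c - q‖ / s + 200 * t k / s))
    simp only [Finite.mem_toFinset] at h
    refine h.trans (le_of_eq ?_)
    rw [ncard_eq_toFinset_card _ (hD k), ← nsmul_eq_mul]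
    apply Finset.sum_eq_card_nsmul
    intro c _
    rw [Real.volume_Icc]
    congr 1
    ring
  have h2 := (hle.trans hbound).trans_lt hsum
  rw [Real.volume_Ioo] at h2
  have h3 : ENNReal.ofReal (1 - 1 / 2) = 1 / 2 := by
    rw [show (1 - 1 / 2 : ℝ) = 1 / 2 by norm_num, ENNReal.ofReal_div_of_pos (by norm_num)]
    simp
  rw [h3] at h2
  exact lt_irrefl _ h2
end

section
/- Let θ ∈ (0,1], M ≥ 0, L ∈ ℕ with L ≥ 1, and let ν be a real number with ν ≥ θ^L · M. Let a_1, a_2, …, a_{L+1} be real numbers with 0 ≤ a_l ≤ M for every l. Then there exists an index l with 1 ≤ l ≤ L such that a_l + ν ≥ θ · a_{l+1}. -/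
/-- abstract pigeonhole behind Lemma 6.3: let `θ ∈ (0,1]`, `M ≥ 0`, `L ≥ 1`,
and `ν ≥ θ^L · M`. If `0 ≤ a l ≤ M` for `1 ≤ l ≤ L+1`, then there is `1 ≤ l ≤ L` with
`a l + ν ≥ θ · a (l+1)`. -/
theorem stmt11 (θ M ν : ℝ) (L : ℕ) (hθ : 0 < θ) (hθ1 : θ ≤ 1) (hM : 0 ≤ M) (hL : 1 ≤ L)
    (hν : θ ^ L * M ≤ ν) (a : ℕ → ℝ)
    (ha : ∀ l, 1 ≤ l → l ≤ L + 1 → 0 ≤ a l ∧ a l ≤ M) :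
    ∃ l, 1 ≤ l ∧ l ≤ L ∧ θ * a (l + 1) ≤ a l + ν := by
  by_contra! h
  have hν0 : 0 ≤ ν := le_trans (by positivity) hν
  have key : ∀ k, 1 ≤ k → k ≤ L → ν < θ ^ k * a (k + 1) := by
    intro k hk
    induction k, hk using Nat.le_induction with
    | base =>
      intro h1
      have := h 1 le_rfl h1
      have := (ha 1 le_rfl (by omega)).1
      rw [pow_one]
      linarith
    | succ k hk ih =>
      intro h1
      have h2 := ih (by omega)
      have h3 := h (k + 1) (by omega) h1
      have h4 : a (k + 1) ≤ θ * a (k + 1 + 1) := by linarith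
      have h5 := mul_le_mul_of_nonneg_left h4 (pow_pos hθ k).le
      rw [pow_succ, mul_assoc]
      linarith
  have h1 := key L hL le_rfl
  have h2 := mul_le_mul_of_nonneg_left (ha (L + 1) (by omega) le_rfl).2 (pow_pos hθ L).le
  linarith
end

section
/- Let F ⊂ D be a finite set of dyadic cubes and let u : ℝ → (D → ℝ) be such that u_Q(t) = 0 for all t whenever Q ∉ F, each function t ↦ u_Q(t) is differentiable, and u satisfies the dyadic Euler equation d u_Q/dt = −c(u(t),u(t))_Q for every Q ∈ D and every t ∈ ℝ. Then the energy t ↦ Σ_{Q∈D} u_Q(t)² is constant in t. -/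
/-- A dyadic cube of `ℝ³` is encoded by its level `j ∈ ℤ` and its lattice position
`k ∈ ℤ³`: it is the cube `2^{-j}(k + [0,1]³)`, of sidelength `2^{-j}`. -/
abbrev DCube : Type := ℤ × (Fin 3 → ℤ)

/-- The level `j(Q)` of a dyadic cube. -/
def DCube.level (Q : DCube) : ℤ := Q.1

/-- `IsChild Q' Q` : the dyadic cube `Q'` is one of the `8` dyadic children of `Q`,
i.e. `Q'` has level `j(Q)+1` and `2^{-(j+1)}(k' + [0,1]³) ⊆ 2^{-j}(k + [0,1]³)`. -/
def IsChild (Q' Q : DCube) : Prop :=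
  Q'.1 = Q.1 + 1 ∧ ∀ i, Q'.2 i = 2 * Q.2 i ∨ Q'.2 i = 2 * Q.2 i + 1

/-- `IsCascade Q Q' Q''` : `Q'` is a dyadic child of `Q` and `Q''` is a dyadic child
of `Q'`. -/
def IsCascade (Q Q' Q'' : DCube) : Prop := IsChild Q' Q ∧ IsChild Q'' Q'

open Classical in
/-- The cascade-down operator:
`c_d(u,v)_R = Σ_{cascades (Q,Q′,Q″), Q″ = R} 2^{(5/2)j(Q)} u_Q v_{Q′}`. -/
noncomputable def cascadeDown (u v : DCube → ℝ) (R : DCube) : ℝ :=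
  ∑ᶠ p : DCube × DCube,
    if IsCascade p.1 p.2 R then 2 ^ ((5 / 2 : ℝ) * (p.1.level : ℝ)) * u p.1 * v p.2 else 0

open Classical in
/-- The cascade-up operator:
`c_u(u,v)_R = Σ_{cascades (Q,Q′,Q″), Q = R} 2^{(5/2)j(Q)} u_{Q″} v_{Q′}`. -/
noncomputable def cascadeUp (u v : DCube → ℝ) (R : DCube) : ℝ :=
  ∑ᶠ p : DCube × DCube,
    if IsCascade R p.1 p.2 then 2 ^ ((5 / 2 : ℝ) * (R.level : ℝ)) * u p.2 * v p.1 else 0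

/-- `c(u,v) = c_d(u,v) − c_u(u,v)`. -/
noncomputable def cascade (u v : DCube → ℝ) : DCube → ℝ :=
  fun R => cascadeDown u v R - cascadeUp u v R


/-- if `u : ℝ → (D → ℝ)` is supported (in the cube variable) in a fixed finite
set `F` of dyadic cubes, each `t ↦ u_Q(t)` is differentiable and satisfies the dyadic Euler
equation `d u_Q/dt = −c(u,u)_Q`, then the energy `Σ_Q u_Q(t)²` is constant in `t`. -/
theorem stmt13 (F : Set DCube) (hF : F.Finite) (u : ℝ → DCube → ℝ)
    (hsupp : ∀ t, ∀ Q, Q ∉ F → u t Q = 0)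
    (hode : ∀ (Q : DCube) (t : ℝ),
      HasDerivAt (fun s => u s Q) (-(cascade (u t) (u t) Q)) t) :
    ∀ t₁ t₂ : ℝ, ∑ᶠ Q : DCube, (u t₁ Q) ^ 2 = ∑ᶠ Q : DCube, (u t₂ Q) ^ 2 := by
  classical
  set S := hF.toFinset with hS
  have hz : ∀ t Q, Q ∉ S → u t Q = 0 := fun t Q h => hsupp t Q (by simpa [hS] using h)
  have hE : ∀ t, ∑ᶠ Q : DCube, (u t Q) ^ 2 = ∑ Q ∈ S, (u t Q) ^ 2 := by
    intro t
    apply finsum_eq_sum_of_support_subset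
    intro Q hQ
    by_contra h
    exact hQ (by simp [hz t Q (by simpa using h)])
  have hd : ∀ t R, cascadeDown (u t) (u t) R = ∑ a ∈ S, ∑ b ∈ S,
      if IsCascade a b R then 2 ^ ((5 / 2 : ℝ) * (a.level : ℝ)) * u t a * u t b else 0 := by
    intro t R
    unfold cascadeDown
    rw [finsum_eq_sum_of_support_subset (s := S ×ˢ S), Finset.sum_product]
    · intro p hp
      by_contra h
      apply hp
      rw [Finset.mem_coe, Finset.mem_product, not_and_or] at h
      rcases h with h | h <;> simp [hz t _ h]
  have hu : ∀ t R, cascadeUp (u t) (u t) R = ∑ b ∈ S, ∑ c ∈ S,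
      if IsCascade R b c then 2 ^ ((5 / 2 : ℝ) * (R.level : ℝ)) * u t c * u t b else 0 := by
    intro t R
    unfold cascadeUp
    rw [finsum_eq_sum_of_support_subset (s := S ×ˢ S), Finset.sum_product]
    · intro p hp
      by_contra h
      apply hp
      rw [Finset.mem_coe, Finset.mem_product, not_and_or] at h
      rcases h with h | h <;> simp [hz t _ h]
  have key : ∀ t, ∑ R ∈ S, u t R * cascadeDown (u t) (u t) R
      = ∑ R ∈ S, u t R * cascadeUp (u t) (u t) R := by
    intro t
    simp only [hd, hu, Finset.mul_sum]
    rw [Finset.sum_comm]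
    refine Finset.sum_congr rfl fun a _ => ?_
    rw [Finset.sum_comm]
    refine Finset.sum_congr rfl fun b _ => Finset.sum_congr rfl fun c _ => ?_
    split_ifs
    · ring
    · simp
  have hder : ∀ t, HasDerivAt (fun s => ∑ Q ∈ S, (u s Q) ^ 2) 0 t := by
    intro t
    have h := HasDerivAt.fun_sum (u := S) (fun Q _ => (hode Q t).fun_pow 2)
    refine HasDerivAt.congr_deriv h ?_
    have : ∀ Q, ((2 : ℕ) : ℝ) * u t Q ^ (2 - 1) * -(cascade (u t) (u t) Q)
        = 2 * (u t Q * cascadeUp (u t) (u t) Q) - 2 * (u t Q * cascadeDown (u t) (u t) Q) := by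
      intro Q
      simp only [cascade]
      norm_num
      ring
    refine (Finset.sum_congr rfl fun Q _ => this Q).trans ?_
    rw [Finset.sum_sub_distrib, ← Finset.mul_sum, ← Finset.mul_sum, key, sub_self]
  intro t₁ t₂
  rw [hE, hE]
  exact is_const_of_deriv_eq_zero (f := fun s => ∑ Q ∈ S, (u s Q) ^ 2)
    (fun t => (hder t).differentiableAt) (fun t => (hder t).deriv) t₁ t₂
end
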